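/- Let p be an odd prime, let q ∈ ℚ_p satisfy |q - 1|_p < 1 with q ≠ 1, let n be a nonnegative integer, and let x be a nonnegative integer. Then the p-adic q-Riemann sums (1/[p^N]_{-q}) · Σ_{y=0}^{p^N - 1} [x+y]_q^n (-q)^y converge as N → ∞, and their limit E_{n,q}(x) equals (1+q) · (1/(1-q))^n · Σ_{l=0}^n C(n,l) (-1)^l q^{l·x} / (1 + q^{l+1}). -/

import Mathlib

/-!
Expanding `[x+y]_q ^ n` by the binomial theorem turns the Riemann sum into a combination of
geometric sums with ratios `-q ^ (l+1)`. As `p ^ N` is odd, these equal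
`(1 + (q ^ p ^ N) ^ (l+1)) / (1 + q ^ (l+1))`, and the prefactor is `(1 + q) / (1 + q ^ p ^ N)`.
Everything thus depends on `N` only through `q ^ p ^ N`, which tends to `1`
(`tendsto_pow_prime_pow`), and at `1` the resulting expression is continuous with the asserted
value.
-/

open Filter

/-- A principal unit `q = 1 + p t` satisfies `q ^ p ^ N ≡ 1` modulo `p ^ (N + 1)`. -/
lemma tendsto_pow_prime_pow (p : ℕ) [Fact p.Prime] (q : ℚ_[p]) (hq1 : ‖q - 1‖ < 1) :
    Tendsto (fun N : ℕ => q ^ p ^ N) atTop (nhds 1) := by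
  have hle : ‖q‖ ≤ 1 := by
    have h := Padic.nonarchimedean (q - 1) 1
    rw [sub_add_cancel, norm_one, max_eq_right hq1.le] at h
    exact h
  let a : ℤ_[p] := ⟨q, hle⟩
  have ha : ‖a - 1‖ < 1 := hq1
  have hd : (p : ℤ_[p]) ∣ a - 1 := by
    rwa [← PadicInt.norm_lt_one_iff_dvd]
  have hb : ∀ N : ℕ, ‖q ^ p ^ N - 1‖ ≤ ((p : ℝ)⁻¹) ^ (N + 1) := by
    intro N
    have h := dvd_sub_pow_of_dvd_sub hd N
    rw [one_pow, ← Ideal.mem_span_singleton, ← PadicInt.norm_le_pow_iff_mem_span_pow] at h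
    have h2 : ‖q ^ p ^ N - 1‖ = ‖a ^ p ^ N - 1‖ := by
      rw [PadicInt.norm_def, PadicInt.coe_sub, PadicInt.coe_pow, PadicInt.coe_one]
    rw [h2]
    refine h.trans_eq ?_
    rw [zpow_neg, zpow_natCast, inv_pow]
  rw [tendsto_iff_norm_sub_tendsto_zero]
  have hp : (1 : ℝ) < p := by exact_mod_cast (Fact.out : p.Prime).one_lt
  refine squeeze_zero (fun _ => norm_nonneg _) hb ?_
  exact (tendsto_pow_atTop_nhds_zero_of_lt_one (by positivity)
    (inv_lt_one_of_one_lt₀ hp)).comp (tendsto_add_atTop_nat 1)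

/-- A power of a principal unit is a principal unit, whereas `-1` is not one as `2` is a unit. -/
lemma one_add_pow_ne_zero (p : ℕ) [Fact p.Prime] (hodd : Odd p) (q : ℚ_[p])
    (hq1 : ‖q - 1‖ < 1) (k : ℕ) : 1 + q ^ k ≠ 0 := by
  have h : ‖q ^ k - 1‖ < 1 := by
    induction k with
    | zero => simp
    | succ k ih =>
      have e : q ^ (k + 1) - 1 = (q ^ k - 1) * (q - 1) + ((q ^ k - 1) + (q - 1)) := by ring
      rw [e]
      refine (Padic.nonarchimedean _ _).trans_lt (max_lt ?_ ?_)
      · rw [norm_mul]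
        exact mul_lt_one_of_nonneg_of_lt_one_left (norm_nonneg _) ih hq1.le
      · exact (Padic.nonarchimedean _ _).trans_lt (max_lt ih hq1)
  intro h0
  have e : q ^ k - 1 = -((2 : ℕ) : ℚ_[p]) := by push_cast; linear_combination h0
  rw [e, norm_neg, Padic.norm_natCast_lt_one_iff] at h
  have h2 := (Nat.prime_dvd_prime_iff_eq Fact.out Nat.prime_two).1 h
  subst h2
  exact absurd hodd (by decide)

lemma sum_pow_mul_eq {K : Type*} [Field K] (q : K) (hne : ∀ k : ℕ, 1 + q ^ k ≠ 0)
    (n x M : ℕ) (hM : Odd M) :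
    ∑ y ∈ Finset.range M, ((1 - q ^ (x + y)) / (1 - q)) ^ n * (-q) ^ y =
      (1 / (1 - q)) ^ n * ∑ l ∈ Finset.range (n + 1),
        (n.choose l : K) * (-1) ^ l * q ^ (l * x) *
          ((1 + (q ^ M) ^ (l + 1)) / (1 + q ^ (l + 1))) := by
  have hgeom : ∀ l : ℕ, (1 + (q ^ M) ^ (l + 1)) / (1 + q ^ (l + 1)) =
      ∑ y ∈ Finset.range M, (-q ^ (l + 1)) ^ y := by
    intro l
    rw [div_eq_iff (hne _)]
    have h := geom_sum_mul_neg (-q ^ (l + 1)) M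
    rw [hM.neg_pow, sub_neg_eq_add, sub_neg_eq_add] at h
    rw [h]
    ring
  simp_rw [hgeom, Finset.mul_sum]
  rw [Finset.sum_comm]
  refine Finset.sum_congr rfl fun y _ => ?_
  have hbin : (1 - q ^ (x + y)) ^ n =
      ∑ l ∈ Finset.range (n + 1), (-q ^ (x + y)) ^ l * (n.choose l : K) := by
    rw [sub_eq_neg_add, add_pow]
    simp
  rw [div_eq_mul_one_div, mul_pow, hbin, Finset.sum_mul, Finset.sum_mul]
  refine Finset.sum_congr rfl fun l _ => ?_
  rw [neg_pow (q ^ (x + y)), neg_pow (q ^ (l + 1)), neg_pow q]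
  ring

/-- Let `p` be an odd prime, `q ∈ ℚ_p` with `|q-1|_p < 1`, `q ≠ 1`, `n x : ℕ`.
Then the `p`-adic `q`-Riemann sums `(1/[p^N]_{-q}) Σ_{y=0}^{p^N-1} [x+y]_q^n (-q)^y` converge
as `N → ∞` to `(1+q) · (1/(1-q))^n · Σ_{l=0}^n C(n,l)(-1)^l q^{l·x}/(1+q^{l+1})`. -/
theorem stmt_11 (p : ℕ) [Fact p.Prime] (hodd : Odd p)
    (q : ℚ_[p]) (hq1 : ‖q - 1‖ < 1) (hq : q ≠ 1) (n x : ℕ) :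
    Tendsto (fun N : ℕ =>
        (1 / ((1 - (-q) ^ (p ^ N)) / (1 + q))) *
          ∑ y ∈ Finset.range (p ^ N), ((1 - q ^ (x + y)) / (1 - q)) ^ n * (-q) ^ y)
      atTop
      (nhds ((1 + q) * (1 / (1 - q)) ^ n *
        ∑ l ∈ Finset.range (n + 1),
          (n.choose l : ℚ_[p]) * (-1) ^ l * q ^ (l * x) / (1 + q ^ (l + 1)))) := by
  have hne := one_add_pow_ne_zero p hodd q hq1
  have hq0 : 1 + q ≠ 0 := by simpa using hne 1
  have h2 : (1 : ℚ_[p]) + 1 ≠ 0 := by norm_num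
  -- The `N`-th Riemann sum is `F (q ^ p ^ N)`, and the asserted limit is `F 1`.
  let F : ℚ_[p] → ℚ_[p] := fun t => (1 + q) / (1 + t) * ((1 / (1 - q)) ^ n *
    ∑ l ∈ Finset.range (n + 1), (n.choose l : ℚ_[p]) * (-1) ^ l * q ^ (l * x) *
      ((1 + t ^ (l + 1)) / (1 + q ^ (l + 1))))
  have hF : ContinuousAt F 1 := by
    refine ContinuousAt.mul (ContinuousAt.div (by fun_prop) (by fun_prop) h2) ?_
    exact Continuous.continuousAt (by fun_prop)
  have hF1 : F 1 = (1 + q) * (1 / (1 - q)) ^ n * ∑ l ∈ Finset.range (n + 1),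
      (n.choose l : ℚ_[p]) * (-1) ^ l * q ^ (l * x) / (1 + q ^ (l + 1)) := by
    simp only [F, one_pow, Finset.mul_sum]
    refine Finset.sum_congr rfl fun l _ => ?_
    have := hne (l + 1)
    field_simp
  rw [← hF1]
  refine (hF.tendsto.comp (tendsto_pow_prime_pow p q hq1)).congr fun N => ?_
  have hM : Odd (p ^ N) := hodd.pow
  rw [sum_pow_mul_eq q hne n x _ hM, hM.neg_pow, sub_neg_eq_add, one_div_div]
  rfl
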